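/- arXiv:1108.5983 — 8 statements merged into one kernel-verified Lean document; each statement's English description precedes it below -/
import Mathlib

section
/- Suppose real numbers Σ₊, Σ₋, Σ×, N₋, N×, A, Ω, Π₊, Π₋, Π×, Ξ satisfy the Hamiltonian constraint 1 = Ω + Σ₊² + Σ₋² + Σ×² + A² + N₋² + N×² + Π₊, the momentum constraint Ξ + 2(Σ₊A + Σ₋N× − Σ×N₋) = 0, the electromagnetic constraint Π₊² = Ξ² + (1/3)(Π₋² + Π×²), and the physical conditions Ω ≥ 0, Π₊ ≥ 0. Then |Ξ| ≤ Π₊, 1 − Ω = (Σ₊ + A)² + (Σ₋ + N×)² + (Σ× − N₋)² + Π₊ + Ξ and 1 − Ω = (Σ₊ − A)² + (Σ₋ − N×)² + (Σ× + N₋)² + Π₊ − Ξ, hence |Σ₊ + A| ≤ 1 and |Σ₊ − A| ≤ 1, and consequently Z := (1 + Σ₊)² − A² = (1 + Σ₊ + A)(1 + Σ₊ − A) ≥ 0. -/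
/-!
The momentum constraint says `Ξ = -2⟨σ, n⟩` for the vectors `σ = (Σ₊, Σ₋, Σ×)` and
`n = (A, N×, -N₋)`, so adding it to or subtracting it from the Hamiltonian constraint completes the
squares: `1 - Ω = ‖σ ± n‖² + Π₊ ± Ξ`. The electromagnetic constraint gives
`|Ξ| ≤ Π₊`, hence `‖σ ± n‖ ≤ 1`, and the first components of `σ ± n` are `Σ₊ ± A`.
-/

section CompletingSquares

variable {R : Type*} [CommRing R] {Sp Sm Sx Nm Nx A Om Pp Xi : R}

theorem one_sub_eq_sum_sq_add_of_constraints
    (hHam : 1 = Om + Sp ^ 2 + Sm ^ 2 + Sx ^ 2 + A ^ 2 + Nm ^ 2 + Nx ^ 2 + Pp)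
    (hMom : Xi + 2 * (Sp * A + Sm * Nx - Sx * Nm) = 0) :
    1 - Om = (Sp + A) ^ 2 + (Sm + Nx) ^ 2 + (Sx - Nm) ^ 2 + Pp + Xi := by
  linear_combination hHam - hMom

theorem one_sub_eq_sum_sq_sub_of_constraints
    (hHam : 1 = Om + Sp ^ 2 + Sm ^ 2 + Sx ^ 2 + A ^ 2 + Nm ^ 2 + Nx ^ 2 + Pp)
    (hMom : Xi + 2 * (Sp * A + Sm * Nx - Sx * Nm) = 0) :
    1 - Om = (Sp - A) ^ 2 + (Sm - Nx) ^ 2 + (Sx + Nm) ^ 2 + Pp - Xi := by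
  linear_combination hHam + hMom

end CompletingSquares

section OrderedRing

variable {R : Type*} [CommRing R] [LinearOrder R] [IsStrictOrderedRing R]

theorem abs_le_of_sq_eq_sq_add_nonneg {x p r : R} (hp : 0 ≤ p) (hr : 0 ≤ r)
    (h : p ^ 2 = x ^ 2 + r) : |x| ≤ p :=
  abs_le_of_sq_le_sq (h ▸ le_add_of_nonneg_right hr) hp

theorem abs_le_one_of_sum_sq_le_one {a b c : R} (h : a ^ 2 + b ^ 2 + c ^ 2 ≤ 1) : |a| ≤ 1 :=
  sq_le_one_iff_abs_le_one a |>.mp <| by linarith [sq_nonneg b, sq_nonneg c]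

theorem one_add_sq_sub_sq_nonneg {s a : R} (hadd : |s + a| ≤ 1) (hsub : |s - a| ≤ 1) :
    0 ≤ (1 + s) ^ 2 - a ^ 2 := by
  rw [sq_sub_sq]
  exact mul_nonneg (by linarith [neg_le_of_abs_le hadd]) (by linarith [neg_le_of_abs_le hsub])

end OrderedRing

theorem stmt_0_general {K : Type*} [Field K] [LinearOrder K] [IsStrictOrderedRing K]
    {Sp Sm Sx Nm Nx A Om Pp Pm Px Xi : K}
    (hHam : 1 = Om + Sp ^ 2 + Sm ^ 2 + Sx ^ 2 + A ^ 2 + Nm ^ 2 + Nx ^ 2 + Pp)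
    (hMom : Xi + 2 * (Sp * A + Sm * Nx - Sx * Nm) = 0)
    (hEM : Pp ^ 2 = Xi ^ 2 + (1 / 3) * (Pm ^ 2 + Px ^ 2))
    (hOm : 0 ≤ Om) (hPp : 0 ≤ Pp) :
    |Xi| ≤ Pp ∧
    1 - Om = (Sp + A) ^ 2 + (Sm + Nx) ^ 2 + (Sx - Nm) ^ 2 + Pp + Xi ∧
    1 - Om = (Sp - A) ^ 2 + (Sm - Nx) ^ 2 + (Sx + Nm) ^ 2 + Pp - Xi ∧
    |Sp + A| ≤ 1 ∧ |Sp - A| ≤ 1 ∧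
    (1 + Sp) ^ 2 - A ^ 2 = (1 + Sp + A) * (1 + Sp - A) ∧
    0 ≤ (1 + Sp) ^ 2 - A ^ 2 := by
  have hXi : |Xi| ≤ Pp := abs_le_of_sq_eq_sq_add_nonneg hPp (by positivity) hEM
  have hplus := one_sub_eq_sum_sq_add_of_constraints hHam hMom
  have hminus := one_sub_eq_sum_sq_sub_of_constraints hHam hMom
  have habs_add : |Sp + A| ≤ 1 :=
    abs_le_one_of_sum_sq_le_one (b := Sm + Nx) (c := Sx - Nm) <| by
      linarith [neg_le_of_abs_le hXi]
  have habs_sub : |Sp - A| ≤ 1 :=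
    abs_le_one_of_sum_sq_le_one (b := Sm - Nx) (c := Sx + Nm) <| by
      linarith [le_of_abs_le hXi]
  exact ⟨hXi, hplus, hminus, habs_add, habs_sub, sq_sub_sq _ _,
    one_add_sq_sub_sq_nonneg habs_add habs_sub⟩

/-- Algebraic consequences of the Hamiltonian, momentum and
electromagnetic constraints of Bianchi class B Einstein–Maxwell cosmology:
`|Ξ| ≤ Π₊`, the two rewritings of `1 − Ω`, hence `|Σ₊ ± A| ≤ 1` and
`Z = (1+Σ₊)² − A² = (1+Σ₊+A)(1+Σ₊−A) ≥ 0`. -/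
theorem stmt_0 (Sp Sm Sx Nm Nx A Om Pp Pm Px Xi : ℝ)
    (hHam : 1 = Om + Sp ^ 2 + Sm ^ 2 + Sx ^ 2 + A ^ 2 + Nm ^ 2 + Nx ^ 2 + Pp)
    (hMom : Xi + 2 * (Sp * A + Sm * Nx - Sx * Nm) = 0)
    (hEM : Pp ^ 2 = Xi ^ 2 + (1 / 3) * (Pm ^ 2 + Px ^ 2))
    (hOm : 0 ≤ Om) (hPp : 0 ≤ Pp) :
    |Xi| ≤ Pp ∧
    1 - Om = (Sp + A) ^ 2 + (Sm + Nx) ^ 2 + (Sx - Nm) ^ 2 + Pp + Xi ∧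
    1 - Om = (Sp - A) ^ 2 + (Sm - Nx) ^ 2 + (Sx + Nm) ^ 2 + Pp - Xi ∧
    |Sp + A| ≤ 1 ∧ |Sp - A| ≤ 1 ∧
    (1 + Sp) ^ 2 - A ^ 2 = (1 + Sp + A) * (1 + Sp - A) ∧
    0 ≤ (1 + Sp) ^ 2 - A ^ 2 :=
  stmt_0_general hHam hMom hEM hOm hPp
end

section
/- Let Σ₊, Σ₋, Σ×, N₋, N×, A, Ω, Π₊, q : I → ℝ be functions on an interval I with Σ₊ and A differentiable, satisfying at every point: the evolution equations Σ₊' = (q−2)Σ₊ − 2(N₋² + N×²) − Π₊ and A' = (q+2Σ₊)A, the deceleration parameter q = 2(Σ₊² + Σ₋² + Σ×²) + (1/2)(3γ−2)Ω + Π₊, and the Hamiltonian constraint 1 = Ω + Σ₊² + Σ₋² + Σ×² + A² + N₋² + N×² + Π₊. Then the function Z := (1 + Σ₊)² − A² satisfies the identity Z' = 2(q−2)Z − 3(γ−2)(1+Σ₊)Ω on I. -/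
/-!
Put `X = 1 + Σ₊`. Eliminating `N₋² + N×²` and `Π₊` between the Hamiltonian constraint and the
formula for `q` turns the system for `(X, A)` into
`X' = (q - 2) X + 2 A² - (3/2)(γ - 2) Ω`, `A' = (q - 2 + 2 X) A`.
In `(X² - A²)' = 2 X X' - 2 A A'` the cubic terms `± 4 X A²` cancel.
-/

section

variable {𝕜 : Type*} [NontriviallyNormedField 𝕜]

theorem hasDerivWithinAt_sq_sub_sq {𝔸 : Type*} [NormedCommRing 𝔸] [NormedAlgebra 𝕜 𝔸]
    {X A : 𝕜 → 𝔸} {s : Set 𝕜} {τ : 𝕜} {r k f : 𝔸}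
    (hX : HasDerivWithinAt X (r * X τ + k * A τ ^ 2 + f) s τ)
    (hA : HasDerivWithinAt A ((r + k * X τ) * A τ) s τ) :
    HasDerivWithinAt (fun t => X t ^ 2 - A t ^ 2)
      (2 * r * (X τ ^ 2 - A τ ^ 2) + 2 * X τ * f) s τ := by
  refine ((hX.fun_pow 2).fun_sub (hA.fun_pow 2)).congr_deriv ?_
  push_cast
  ring

theorem shear_evolution_eq_of_hamiltonian {K : Type*} [Field K] [NeZero (2 : K)]
    {γ Sp Sm Sx Nm Nx A Om Pp q : K}
    (hq : q = 2 * (Sp ^ 2 + Sm ^ 2 + Sx ^ 2) + (1 / 2) * (3 * γ - 2) * Om + Pp)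
    (hHam : 1 = Om + Sp ^ 2 + Sm ^ 2 + Sx ^ 2 + A ^ 2 + Nm ^ 2 + Nx ^ 2 + Pp) :
    (q - 2) * Sp - 2 * (Nm ^ 2 + Nx ^ 2) - Pp =
      (q - 2) * (1 + Sp) + 2 * A ^ 2 + -(3 / 2 * (γ - 2) * Om) := by
  have half : (2 : K) * (1 / 2) = 1 := mul_one_div_cancel two_ne_zero
  linear_combination 2 * hHam - hq - 2 * Om * half

theorem stmt_3_general [NeZero (2 : 𝕜)] {γ : 𝕜} {Sp Sm Sx Nm Nx A Om Pp q : 𝕜 → 𝕜}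
    {s : Set 𝕜} {τ : 𝕜}
    (hSp : HasDerivWithinAt Sp
      ((q τ - 2) * Sp τ - 2 * (Nm τ ^ 2 + Nx τ ^ 2) - Pp τ) s τ)
    (hA : HasDerivWithinAt A ((q τ + 2 * Sp τ) * A τ) s τ)
    (hq : q τ = 2 * (Sp τ ^ 2 + Sm τ ^ 2 + Sx τ ^ 2)
      + (1 / 2) * (3 * γ - 2) * Om τ + Pp τ)
    (hHam : 1 = Om τ + Sp τ ^ 2 + Sm τ ^ 2 + Sx τ ^ 2
      + A τ ^ 2 + Nm τ ^ 2 + Nx τ ^ 2 + Pp τ) :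
    HasDerivWithinAt (fun t => (1 + Sp t) ^ 2 - A t ^ 2)
      (2 * (q τ - 2) * ((1 + Sp τ) ^ 2 - A τ ^ 2)
        - 3 * (γ - 2) * (1 + Sp τ) * Om τ) s τ := by
  have hX : HasDerivWithinAt (fun t => 1 + Sp t)
      ((q τ - 2) * (1 + Sp τ) + 2 * A τ ^ 2 + -(3 / 2 * (γ - 2) * Om τ)) s τ :=
    (hSp.const_add 1).congr_deriv (shear_evolution_eq_of_hamiltonian hq hHam)
  have hA' : HasDerivWithinAt A ((q τ - 2 + 2 * (1 + Sp τ)) * A τ) s τ :=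
    hA.congr_deriv (by ring)
  refine (hasDerivWithinAt_sq_sub_sq hX hA').congr_deriv ?_
  have two_mul_source : 2 * (3 / 2 * (γ - 2) * Om τ) = 3 * (γ - 2) * Om τ := by
    field_simp
  linear_combination -(1 + Sp τ) * two_mul_source

end

/-- Along solutions of the class B Einstein–Maxwell system, the
function `Z = (1+Σ₊)² − A²` satisfies `Z' = 2(q−2)Z − 3(γ−2)(1+Σ₊)Ω`. -/
theorem stmt_3 (γ : ℝ) (I : Set ℝ) (hI : I.OrdConnected)
    (Sp Sm Sx Nm Nx A Om Pp q : ℝ → ℝ)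
    (hSp : ∀ τ ∈ I, HasDerivAt Sp
      ((q τ - 2) * Sp τ - 2 * ((Nm τ) ^ 2 + (Nx τ) ^ 2) - Pp τ) τ)
    (hA : ∀ τ ∈ I, HasDerivAt A ((q τ + 2 * Sp τ) * A τ) τ)
    (hq : ∀ τ ∈ I, q τ = 2 * ((Sp τ) ^ 2 + (Sm τ) ^ 2 + (Sx τ) ^ 2)
      + (1 / 2) * (3 * γ - 2) * Om τ + Pp τ)
    (hHam : ∀ τ ∈ I, 1 = Om τ + (Sp τ) ^ 2 + (Sm τ) ^ 2 + (Sx τ) ^ 2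
      + (A τ) ^ 2 + (Nm τ) ^ 2 + (Nx τ) ^ 2 + Pp τ) :
    ∀ τ ∈ I, HasDerivAt (fun t => (1 + Sp t) ^ 2 - (A t) ^ 2)
      (2 * (q τ - 2) * ((1 + Sp τ) ^ 2 - (A τ) ^ 2)
        - 3 * (γ - 2) * (1 + Sp τ) * Om τ) τ := by
  intro τ hτ
  exact (stmt_3_general (hSp τ hτ).hasDerivWithinAt (hA τ hτ).hasDerivWithinAt
    (hq τ hτ) (hHam τ hτ)).hasDerivAt Filter.univ_mem
end

section
/- Let h̃, r, s ∈ ℝ with 0 ≤ r ≤ 1, s² ≤ r(1−r) and h̃(1−r)² + 3s² ≥ 0. Define Σ₊ = −r, Σ₋ = 0, Σ× = s, N₊ = √(h̃(1−r)² + 3s²), N₋ = −s, N× = 0, A = 1−r, Π₊ = Ξ = 2r(1−r) − 2s², Π₋ = Π× = 0, Ω = 0, R = −N₊, and q = 2r. Then: (i) q = 2(Σ₊² + Σ₋² + Σ×²) + (1/2)(3γ−2)Ω + Π₊; (ii) all twelve evolution right-hand sides vanish, i.e. (q−2)Σ₊ − 2(N₋²+N×²) − Π₊ = 0, (q−2)Σ₋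 + 2Σ×R − 2(N₊N₋ − AN×) − Π₋ = 0, (q−2)Σ× − 2Σ₋R − 2(N₊N× + AN₋) − Π× = 0, (q+2Σ₊)N₊ + 6(Σ₋N₋ + Σ×N×) = 0, (q+2Σ₊)N₋ + 2(Σ₋N₊ + N×R) = 0, (q+2Σ₊)N× + 2(Σ×N₊ − N₋R) = 0, (q+2Σ₊)A = 0, (2q−3γ+2)Ω = 0, 2(q−1+Σ₊)Π₊ + 2(Σ₋Π₋ + Σ×Π× + AΞ) = 0, 2(q−1+Σ₊)Ξ + 2(AΠ₊ + N×Π₋ − N₋Π×) = 0, 2(q−1+Σ₊)Π₋ + 6Σ₋Π₊ − 6N×Ξ + 2RΠ× = 0, 2(q−1+Σ₊)Π× + 6Σ×Π₊ + 6N₋Ξ − 2RΠ₋ = 0; (iii) the constraints hold: 1 = Ω + Σ₊² + Σ₋² + Σ×² + A² + N₋² + N×² + Π₊, Ξ + 2(Σ₊A + Σ₋N× − Σ×N₋) = 0, Π₊² = Ξ² + (1/3)(Π₋² + Π×²), and N₊² − 3(N₋² + N×²) = h̃A²; (iv) Π₊ ≥ 0. Hence this two-parameter family (the electro-vacuum plane-wave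 solutions) consists of equilibrium points of the system. -/
/-!
On a plane-wave state the relation `q = -2Σ₊` removes every term proportional to `q + 2Σ₊`, the
relation `A = 1 + Σ₊` turns `q - 1 + Σ₊` into `-A`, which balances the Maxwell equations of a null
field `Ξ = Π₊`, and `N₋ = -Σ×` together with `R = -N₊` balances the remaining terms. What is left of
the whole system is a single scalar equation, `Π₊ = -2(Σ₊(1 + Σ₊) + Σ×²)`: the `Σ₊` equation, the
formula for `q` and the Hamiltonian and momentum constraints all reduce to it. With `Σ₊ = -r` and
`Σ× = s` it reads `Π₊ = 2r(1 - r) - 2s²`, and the group first integral only fixes `N₊²`.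
-/

/-- Expansion-normalised state of a nonexceptional Bianchi class B Einstein–Maxwell cosmology with
a nontilted perfect fluid: shear `Σ` (`Sp`, `Sm`, `Sx`), spatial curvature (`Np`, `Nm`, `Nx`, `A`),
electromagnetic variables `Π` and `Ξ` (`Pp`, `Pm`, `Px`, `Xi`) and fluid density `Ω` (`Om`). The
suffixes `p`, `m`, `x` stand for the indices `+`, `-`, `×`. -/
structure BianchiState where
  (Sp Sm Sx Np Nm Nx A Pp Pm Px Xi Om : ℝ)

namespace BianchiState

/-- The state is an equilibrium point for the fluid index `γ` and the frame rotation rate `R`: all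
evolution right-hand sides vanish. The deceleration parameter `q` is a function of the state; it is
carried as an argument together with its defining relation `deceleration`. -/
structure IsEquilibrium (γ q R : ℝ) (x : BianchiState) : Prop where
  deceleration :
    q = 2 * (x.Sp ^ 2 + x.Sm ^ 2 + x.Sx ^ 2) + (1 / 2) * (3 * γ - 2) * x.Om + x.Pp
  Sp_rhs : (q - 2) * x.Sp - 2 * (x.Nm ^ 2 + x.Nx ^ 2) - x.Pp = 0
  Sm_rhs : (q - 2) * x.Sm + 2 * x.Sx * R - 2 * (x.Np * x.Nm - x.A * x.Nx) - x.Pm = 0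
  Sx_rhs : (q - 2) * x.Sx - 2 * x.Sm * R - 2 * (x.Np * x.Nx + x.A * x.Nm) - x.Px = 0
  Np_rhs : (q + 2 * x.Sp) * x.Np + 6 * (x.Sm * x.Nm + x.Sx * x.Nx) = 0
  Nm_rhs : (q + 2 * x.Sp) * x.Nm + 2 * (x.Sm * x.Np + x.Nx * R) = 0
  Nx_rhs : (q + 2 * x.Sp) * x.Nx + 2 * (x.Sx * x.Np - x.Nm * R) = 0
  A_rhs : (q + 2 * x.Sp) * x.A = 0
  Om_rhs : (2 * q - 3 * γ + 2) * x.Om = 0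
  Pp_rhs : 2 * (q - 1 + x.Sp) * x.Pp + 2 * (x.Sm * x.Pm + x.Sx * x.Px + x.A * x.Xi) = 0
  Xi_rhs : 2 * (q - 1 + x.Sp) * x.Xi + 2 * (x.A * x.Pp + x.Nx * x.Pm - x.Nm * x.Px) = 0
  Pm_rhs : 2 * (q - 1 + x.Sp) * x.Pm + 6 * x.Sm * x.Pp - 6 * x.Nx * x.Xi + 2 * R * x.Px = 0
  Px_rhs : 2 * (q - 1 + x.Sp) * x.Px + 6 * x.Sx * x.Pp + 6 * x.Nm * x.Xi - 2 * R * x.Pm = 0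

/-- The constraints of the system: the Hamiltonian and momentum constraints, the algebraic relation
between the electromagnetic variables, and the class B first integral with group parameter
`htilde = 1 / h`. -/
structure SatisfiesConstraints (htilde : ℝ) (x : BianchiState) : Prop where
  hamiltonian :
    1 = x.Om + x.Sp ^ 2 + x.Sm ^ 2 + x.Sx ^ 2 + x.A ^ 2 + x.Nm ^ 2 + x.Nx ^ 2 + x.Pp
  momentum : x.Xi + 2 * (x.Sp * x.A + x.Sm * x.Nx - x.Sx * x.Nm) = 0
  electromagnetic : x.Pp ^ 2 = x.Xi ^ 2 + (1 / 3) * (x.Pm ^ 2 + x.Px ^ 2)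
  group : x.Np ^ 2 - 3 * (x.Nm ^ 2 + x.Nx ^ 2) = htilde * x.A ^ 2

/-- The linear relations of an electro-vacuum plane wave in the gauge `N× = 0`. The field strength
`Π₊` and the curvature `N₊` are left free. -/
structure IsPlaneWave (x : BianchiState) : Prop where
  Sm_eq : x.Sm = 0
  Nm_eq : x.Nm = -x.Sx
  Nx_eq : x.Nx = 0
  A_eq : x.A = 1 + x.Sp
  Pm_eq : x.Pm = 0
  Px_eq : x.Px = 0
  Xi_eq : x.Xi = x.Pp
  Om_eq : x.Om = 0

namespace IsPlaneWave

variable {x : BianchiState}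

theorem isEquilibrium_iff (hx : x.IsPlaneWave) (γ : ℝ) :
    x.IsEquilibrium γ (-2 * x.Sp) (-x.Np) ↔ x.Pp = -2 * (x.Sp * (1 + x.Sp) + x.Sx ^ 2) := by
  obtain ⟨hSm, hNm, hNx, hA, hPm, hPx, hXi, hOm⟩ := hx
  constructor
  · intro hEq
    have hSp := hEq.Sp_rhs
    rw [hNm, hNx] at hSp
    linear_combination -hSp
  · intro hPp
    constructor <;> simp only [hSm, hNm, hNx, hA, hPm, hPx, hXi, hOm, hPp] <;> ring

theorem satisfiesConstraints_iff (hx : x.IsPlaneWave) (htilde : ℝ) :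
    x.SatisfiesConstraints htilde ↔
      x.Pp = -2 * (x.Sp * (1 + x.Sp) + x.Sx ^ 2) ∧
        x.Np ^ 2 = htilde * (1 + x.Sp) ^ 2 + 3 * x.Sx ^ 2 := by
  obtain ⟨hSm, hNm, hNx, hA, hPm, hPx, hXi, hOm⟩ := hx
  constructor
  · rintro ⟨-, hmom, -, hgroup⟩
    rw [hXi, hA, hSm, hNm] at hmom
    rw [hNm, hNx, hA] at hgroup
    exact ⟨by linear_combination hmom, by linear_combination hgroup⟩
  · rintro ⟨hPp, hNp⟩
    constructor <;> simp only [hSm, hNm, hNx, hA, hPm, hPx, hXi, hOm, hPp, hNp] <;> ring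

end IsPlaneWave

/-- The family of electro-vacuum plane waves, parametrised by `r = -Σ₊`, `s = Σ×` and the value `n`
of `N₊`, which the group first integral determines up to sign. -/
def planeWave (r s n : ℝ) : BianchiState where
  Sp := -r
  Sm := 0
  Sx := s
  Np := n
  Nm := -s
  Nx := 0
  A := 1 - r
  Pp := 2 * r * (1 - r) - 2 * s ^ 2
  Pm := 0
  Px := 0
  Xi := 2 * r * (1 - r) - 2 * s ^ 2
  Om := 0

theorem isPlaneWave_planeWave (r s n : ℝ) : (planeWave r s n).IsPlaneWave := by
  constructor <;> simp only [planeWave, sub_eq_add_neg]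

theorem planeWave_Pp (r s n : ℝ) :
    (planeWave r s n).Pp =
      -2 * ((planeWave r s n).Sp * (1 + (planeWave r s n).Sp) + (planeWave r s n).Sx ^ 2) := by
  simp only [planeWave]
  ring

theorem isEquilibrium_planeWave (γ r s n : ℝ) :
    (planeWave r s n).IsEquilibrium γ (2 * r) (-n) := by
  have hq : -2 * (planeWave r s n).Sp = 2 * r := neg_mul_neg 2 r
  rw [← hq]
  exact ((isPlaneWave_planeWave r s n).isEquilibrium_iff γ).mpr (planeWave_Pp r s n)

theorem satisfiesConstraints_planeWave_iff {htilde r s n : ℝ} :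
    (planeWave r s n).SatisfiesConstraints htilde ↔
      n ^ 2 = htilde * (1 - r) ^ 2 + 3 * s ^ 2 := by
  rw [(isPlaneWave_planeWave r s n).satisfiesConstraints_iff htilde,
    and_iff_right (planeWave_Pp r s n)]
  simp only [planeWave, sub_eq_add_neg]

theorem planeWave_Pp_nonneg_iff {r s n : ℝ} :
    0 ≤ (planeWave r s n).Pp ↔ s ^ 2 ≤ r * (1 - r) := by
  rw [planeWave, sub_nonneg, mul_assoc, mul_le_mul_iff_right₀ two_pos]

end BianchiState

/-- The two-parameter family of electro-vacuum plane-wave states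
consists of equilibrium points of the Bianchi class B Einstein–Maxwell system:
all evolution right-hand sides vanish and all constraints hold. -/
theorem stmt_5 (htilde r s γ : ℝ)
    (hr0 : 0 ≤ r) (hr1 : r ≤ 1)
    (hs : s ^ 2 ≤ r * (1 - r))
    (hh : 0 ≤ htilde * (1 - r) ^ 2 + 3 * s ^ 2)
    (Sp Sm Sx Np Nm Nx A Pp Pm Px Xi Om R q : ℝ)
    (hSp : Sp = -r) (hSm : Sm = 0) (hSx : Sx = s)
    (hNp : Np = Real.sqrt (htilde * (1 - r) ^ 2 + 3 * s ^ 2))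
    (hNm : Nm = -s) (hNx : Nx = 0)
    (hA : A = 1 - r)
    (hPp : Pp = 2 * r * (1 - r) - 2 * s ^ 2)
    (hXi : Xi = 2 * r * (1 - r) - 2 * s ^ 2)
    (hPm : Pm = 0) (hPx : Px = 0) (hOm : Om = 0)
    (hR : R = -Np) (hq : q = 2 * r) :
    -- (i) deceleration parameter
    (q = 2 * (Sp ^ 2 + Sm ^ 2 + Sx ^ 2) + (1 / 2) * (3 * γ - 2) * Om + Pp) ∧
    -- (ii) all twelve evolution right-hand sides vanish
    ((q - 2) * Sp - 2 * (Nm ^ 2 + Nx ^ 2) - Pp = 0) ∧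
    ((q - 2) * Sm + 2 * Sx * R - 2 * (Np * Nm - A * Nx) - Pm = 0) ∧
    ((q - 2) * Sx - 2 * Sm * R - 2 * (Np * Nx + A * Nm) - Px = 0) ∧
    ((q + 2 * Sp) * Np + 6 * (Sm * Nm + Sx * Nx) = 0) ∧
    ((q + 2 * Sp) * Nm + 2 * (Sm * Np + Nx * R) = 0) ∧
    ((q + 2 * Sp) * Nx + 2 * (Sx * Np - Nm * R) = 0) ∧
    ((q + 2 * Sp) * A = 0) ∧
    ((2 * q - 3 * γ + 2) * Om = 0) ∧
    (2 * (q - 1 + Sp) * Pp + 2 * (Sm * Pm + Sx * Px + A * Xi) = 0) ∧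
    (2 * (q - 1 + Sp) * Xi + 2 * (A * Pp + Nx * Pm - Nm * Px) = 0) ∧
    (2 * (q - 1 + Sp) * Pm + 6 * Sm * Pp - 6 * Nx * Xi + 2 * R * Px = 0) ∧
    (2 * (q - 1 + Sp) * Px + 6 * Sx * Pp + 6 * Nm * Xi - 2 * R * Pm = 0) ∧
    -- (iii) constraints
    (1 = Om + Sp ^ 2 + Sm ^ 2 + Sx ^ 2 + A ^ 2 + Nm ^ 2 + Nx ^ 2 + Pp) ∧
    (Xi + 2 * (Sp * A + Sm * Nx - Sx * Nm) = 0) ∧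
    (Pp ^ 2 = Xi ^ 2 + (1 / 3) * (Pm ^ 2 + Px ^ 2)) ∧
    (Np ^ 2 - 3 * (Nm ^ 2 + Nx ^ 2) = htilde * A ^ 2) ∧
    -- (iv) positivity
    (0 ≤ Pp) := by
  have hNp_sq : Np ^ 2 = htilde * (1 - r) ^ 2 + 3 * s ^ 2 := by rw [hNp, Real.sq_sqrt hh]
  have hEq := BianchiState.isEquilibrium_planeWave γ r s Np
  have hCon := BianchiState.satisfiesConstraints_planeWave_iff.mpr hNp_sq
  have hPp_nonneg := (BianchiState.planeWave_Pp_nonneg_iff (n := Np)).mpr hs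
  subst hSp hSm hSx hNm hNx hA hPp hXi hPm hPx hOm hR hq
  exact ⟨hEq.deceleration,
    hEq.Sp_rhs, hEq.Sm_rhs, hEq.Sx_rhs,
    hEq.Np_rhs, hEq.Nm_rhs, hEq.Nx_rhs, hEq.A_rhs, hEq.Om_rhs,
    hEq.Pp_rhs, hEq.Xi_rhs, hEq.Pm_rhs, hEq.Px_rhs,
    hCon.hamiltonian, hCon.momentum, hCon.electromagnetic, hCon.group,
    hPp_nonneg⟩
end

section
/- Let γ ∈ ℝ and set α = (3γ−2)/2 and β = (3γ−6)/2. Let A, Σ₊ : I → ℝ be differentiable functions on an interval I and define pointwise Π₊ = −2AΣ₊ and q = α(1−A²) − βΣ₊² + (α+β)AΣ₊. If A' = (q + 2Σ₊)A and Σ₊' = (q−2)Σ₊ − Π₊ on I, then the function αA − βΣ₊ satisfies the identity (αA − βΣ₊)' = [α²A − β²Σ₊ + (αA − βΣ₊)²]·[1 − (A − Σ₊)] on I. -/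
/-!
Write `w = αA − βΣ₊` and `c = α − β`, which equals `2` for the stated constants. The deceleration
parameter factors as `q = α − w (A − Σ₊)`, so along the flow
`w' = q w + c β Σ₊ + c² A Σ₊ = (α² A − β² Σ₊) − w² (A − Σ₊) + c² A Σ₊`. The last term is
`w² − (α² A − β² Σ₊) (A − Σ₊)`, and substituting it makes the factor `1 − (A − Σ₊)` split off.
-/

section CommRing

variable {R : Type*} [CommRing R]

theorem deceleration_eq_sub_mul (α β a s : R) :
    α * (1 - a ^ 2) - β * s ^ 2 + (α + β) * a * s = α - (α * a - β * s) * (a - s) := by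
  ring

theorem mul_sub_mul_sq_eq (α β a s : R) :
    (α * a - β * s) ^ 2 = (α ^ 2 * a - β ^ 2 * s) * (a - s) + (α - β) ^ 2 * (a * s) := by
  ring

theorem mul_sub_mul_vectorField_eq {α β a s q : R}
    (hq : q = α * (1 - a ^ 2) - β * s ^ 2 + (α + β) * a * s) :
    α * ((q + (α - β) * s) * a) - β * ((q - (α - β)) * s - -(α - β) * a * s) =
      (α ^ 2 * a - β ^ 2 * s + (α * a - β * s) ^ 2) * (1 - (a - s)) := by
  calc
    _ = q * (α * a - β * s) + (α - β) * β * s + (α - β) ^ 2 * (a * s) := by ring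
    _ = (α - (α * a - β * s) * (a - s)) * (α * a - β * s)
          + (α - β) * β * s + (α - β) ^ 2 * (a * s) := by
      rw [hq, deceleration_eq_sub_mul]
    _ = (α ^ 2 * a - β ^ 2 * s) - (α * a - β * s) ^ 2 * (a - s)
          + (α - β) ^ 2 * (a * s) := by ring
    _ = (α ^ 2 * a - β ^ 2 * s + (α * a - β * s) ^ 2) * (1 - (a - s)) := by
      linear_combination -mul_sub_mul_sq_eq α β a s

end CommRing

theorem stmt_9_general {𝕜 𝔸 : Type*} [NontriviallyNormedField 𝕜] [NormedCommRing 𝔸]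
    [NormedAlgebra 𝕜 𝔸] {A S : 𝕜 → 𝔸} {α β c p q : 𝔸} {τ : 𝕜} (hc : c = α - β)
    (hp : p = -c * A τ * S τ)
    (hq : q = α * (1 - A τ ^ 2) - β * S τ ^ 2 + (α + β) * A τ * S τ)
    (hA : HasDerivAt A ((q + c * S τ) * A τ) τ)
    (hS : HasDerivAt S ((q - c) * S τ - p) τ) :
    HasDerivAt (fun t => α * A t - β * S t)
      ((α ^ 2 * A τ - β ^ 2 * S τ + (α * A τ - β * S τ) ^ 2) * (1 - (A τ - S τ))) τ := by
  subst hp hc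
  exact ((hA.const_mul α).fun_sub (hS.const_mul β)).congr_deriv (mul_sub_mul_vectorField_eq hq)

/-- On the branch `Π₊ = −2AΣ₊` of the LRS system, the function
`αA − βΣ₊` (with `α = (3γ−2)/2`, `β = (3γ−6)/2`) satisfies the derivative
identity `(αA − βΣ₊)' = [α²A − β²Σ₊ + (αA − βΣ₊)²]·[1 − (A − Σ₊)]`. -/
theorem stmt_9 (γ : ℝ) (I : Set ℝ) (hI : I.OrdConnected)
    (A Sp : ℝ → ℝ)
    (α β : ℝ) (hα : α = (3 * γ - 2) / 2) (hβ : β = (3 * γ - 6) / 2)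
    (Pp q : ℝ → ℝ)
    (hPp : ∀ τ ∈ I, Pp τ = -2 * A τ * Sp τ)
    (hq : ∀ τ ∈ I, q τ = α * (1 - (A τ) ^ 2) - β * (Sp τ) ^ 2
      + (α + β) * A τ * Sp τ)
    (hA : ∀ τ ∈ I, HasDerivAt A ((q τ + 2 * Sp τ) * A τ) τ)
    (hSp : ∀ τ ∈ I, HasDerivAt Sp ((q τ - 2) * Sp τ - Pp τ) τ) :
    ∀ τ ∈ I, HasDerivAt (fun t => α * A t - β * Sp t)
      ((α ^ 2 * A τ - β ^ 2 * Sp τ + (α * A τ - β * Sp τ) ^ 2)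
        * (1 - (A τ - Sp τ))) τ := by
  intro τ hτ
  exact stmt_9_general (by rw [hα, hβ]; ring) (hPp τ hτ) (hq τ hτ) (hA τ hτ) (hSp τ hτ)
end

section
/- Let 2/3 ≤ γ ≤ 2 and set α = (3γ−2)/2 and β = (3γ−6)/2. Let A, Σ₊ be real numbers with A > 0, Σ₊ < 0 and A − Σ₊ < 1. Then [α²A − β²Σ₊ + (αA − βΣ₊)²]·[1 − (A − Σ₊)] > 0; consequently, along any solution of the LRS system on the invariant set Σ₊ < 0 with positive fluid density Ω = 1 − (A−Σ₊)² > 0, the function αA − βΣ₊ is strictly increasing. -/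
section OrderedRing

variable {R : Type*} [CommRing R] [LinearOrder R] [IsStrictOrderedRing R] {α β A S : R}

lemma sq_mul_sub_sq_mul_pos (hαβ : α ≠ 0 ∨ β ≠ 0) (hA : 0 < A) (hS : S < 0) :
    0 < α ^ 2 * A - β ^ 2 * S := by
  rw [sub_eq_add_neg, ← mul_neg]
  have hS' : 0 < -S := neg_pos.mpr hS
  rcases hαβ with hα | hβ
  · exact add_pos_of_pos_of_nonneg (by positivity) (by positivity)
  · exact add_pos_of_nonneg_of_pos (by positivity) (by positivity)

lemma sq_mul_sub_sq_mul_add_sq_mul_one_sub_pos (hαβ : α ≠ 0 ∨ β ≠ 0) (hA : 0 < A) (hS : S < 0)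
    (hAS : A - S < 1) :
    0 < (α ^ 2 * A - β ^ 2 * S + (α * A - β * S) ^ 2) * (1 - (A - S)) :=
  mul_pos (add_pos_of_pos_of_nonneg (sq_mul_sub_sq_mul_pos hαβ hA hS) (sq_nonneg _))
    (sub_pos.mpr hAS)

lemma lt_one_of_one_sub_sq_pos {x : R} (hx : 0 < 1 - x ^ 2) : x < 1 :=
  lt_of_abs_lt ((sq_lt_one_iff_abs_lt_one x).mp (sub_pos.mp hx))

end OrderedRing

lemma strictMonoOn_of_ordConnected_of_hasDerivWithinAt_pos {I : Set ℝ} (hI : I.OrdConnected)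
    {f f' : ℝ → ℝ} (hf : ∀ t ∈ I, HasDerivWithinAt f (f' t) I t) (hf' : ∀ t ∈ I, 0 < f' t) :
    StrictMonoOn f I :=
  strictMonoOn_of_hasDerivWithinAt_pos hI.convex (fun t ht ↦ (hf t ht).continuousWithinAt)
    (fun t ht ↦ (hf t (interior_subset ht)).mono interior_subset)
    (fun t ht ↦ hf' t (interior_subset ht))

theorem stmt_10_general {α β : ℝ} (hαβ : α ≠ 0 ∨ β ≠ 0) :
    (∀ A Sp : ℝ, 0 < A → Sp < 0 → A - Sp < 1 →
      (α ^ 2 * A - β ^ 2 * Sp + (α * A - β * Sp) ^ 2) * (1 - (A - Sp)) > 0) ∧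
    (∀ (I : Set ℝ), I.OrdConnected →
      ∀ (A Sp : ℝ → ℝ),
        (∀ τ ∈ I, HasDerivWithinAt (fun t => α * A t - β * Sp t)
          ((α ^ 2 * A τ - β ^ 2 * Sp τ + (α * A τ - β * Sp τ) ^ 2)
            * (1 - (A τ - Sp τ))) I τ) →
        (∀ τ ∈ I, 0 < A τ) →
        (∀ τ ∈ I, Sp τ < 0) →
        (∀ τ ∈ I, 0 < 1 - (A τ - Sp τ) ^ 2) →
        StrictMonoOn (fun t => α * A t - β * Sp t) I) := by
  refine ⟨fun A Sp ↦ sq_mul_sub_sq_mul_add_sq_mul_one_sub_pos hαβ, ?_⟩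
  intro I hI A Sp hderiv hA hSp hΩ
  exact strictMonoOn_of_ordConnected_of_hasDerivWithinAt_pos hI hderiv fun τ hτ ↦
    sq_mul_sub_sq_mul_add_sq_mul_one_sub_pos hαβ (hA τ hτ) (hSp τ hτ)
      (lt_one_of_one_sub_sq_pos (hΩ τ hτ))

/-- For `2/3 ≤ γ ≤ 2`, `α = (3γ−2)/2`, `β = (3γ−6)/2`, on the
region `A > 0`, `Σ₊ < 0`, `A − Σ₊ < 1` one has
`[α²A − β²Σ₊ + (αA − βΣ₊)²]·[1 − (A − Σ₊)] > 0`; consequently along any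
solution of the LRS system on the invariant set `Σ₊ < 0` with positive fluid
density, the function `αA − βΣ₊` is strictly increasing. -/
theorem stmt_10 (γ : ℝ) (hγl : 2 / 3 ≤ γ) (hγu : γ ≤ 2)
    (α β : ℝ) (hα : α = (3 * γ - 2) / 2) (hβ : β = (3 * γ - 6) / 2) :
    (∀ A Sp : ℝ, 0 < A → Sp < 0 → A - Sp < 1 →
      (α ^ 2 * A - β ^ 2 * Sp + (α * A - β * Sp) ^ 2) * (1 - (A - Sp)) > 0) ∧
    (∀ (I : Set ℝ), I.OrdConnected →
      ∀ (A Sp : ℝ → ℝ),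
        (∀ τ ∈ I, HasDerivAt (fun t => α * A t - β * Sp t)
          ((α ^ 2 * A τ - β ^ 2 * Sp τ + (α * A τ - β * Sp τ) ^ 2)
            * (1 - (A τ - Sp τ))) τ) →
        (∀ τ ∈ I, 0 < A τ) →
        (∀ τ ∈ I, Sp τ < 0) →
        (∀ τ ∈ I, 0 < 1 - (A τ - Sp τ) ^ 2) →
        StrictMonoOn (fun t => α * A t - β * Sp t) I) := by
  -- `α` and `β` cannot both vanish because `α - β = 2`.
  have hαβ : α ≠ 0 ∨ β ≠ 0 := by by_contra! h; linarith [h.1, h.2]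
  exact (stmt_10_general hαβ).imp_right fun hmono I hI A Sp hderiv ↦
    hmono I hI A Sp fun τ hτ ↦ (hderiv τ hτ).hasDerivWithinAt
end

section
/- Define on the interval τ > 0: a(τ)⁻² = e^{3τ}(sinh 2τ)^{−1/2}, α(τ) = (1/2)(cosh 2τ/sinh 2τ) − 3/2, β(τ) = cosh 2τ/sinh 2τ, ρ(τ) = 0, π₊(τ) = (cosh 2τ/sinh 2τ − 1)·e^{−3τ}(sinh 2τ)^{1/2}, q₁(τ) = 3π₊(τ). Then for every τ > 0 and every γ, the equations (E1) α' − 2β' − 2αβ − 2β² = (1/2)(3γ−2)a⁻²ρ + 3a⁻²π₊, (E2) 2(α+β) = a⁻²q₁, (E3) −α' − 2αβ − 2 = (1/2)(2−γ)a⁻²ρ + 3a⁻²π₊, (E4) β' + 2β² − 2 = (1/2)(2−γ)a⁻²ρ hold, with ρ = 0, π₊ > 0 and q₁ = +3π₊. This is the right-handed electro-vacuum LRS solution, which is future-asymptotic to the Milne universe. -/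
/-!
For a right-handed electro-vacuum, `ρ = 0` and `q₁ = 3π₊`, equation (E4) is the Riccati equation
`β' = 2(1 - β²)`, solved by `β = coth 2τ`. Eliminating `α'` and `π₊` from (E1)–(E3) leaves
`(β + 1)(2α - β + 3) = 0`, whence `α = β/2 - 3/2`, and then (E2) reads `a⁻²π₊ = β - 1`.
Conversely, these three relations imply all four equations.
-/

section Hyperbolic

variable {x : ℝ}

theorem hasDerivAt_cosh_div_sinh (hx : x ≠ 0) :
    HasDerivAt (fun t => Real.cosh t / Real.sinh t) (1 - (Real.cosh x / Real.sinh x) ^ 2) x := by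
  have hsinh : Real.sinh x ≠ 0 := Real.sinh_ne_zero.mpr hx
  refine ((Real.hasDerivAt_cosh x).div (Real.hasDerivAt_sinh x) hsinh).congr_deriv ?_
  field_simp

theorem hasDerivAt_cosh_div_sinh_const_mul {c : ℝ} (hc : c ≠ 0) (hx : x ≠ 0) :
    HasDerivAt (fun t => Real.cosh (c * t) / Real.sinh (c * t))
      (c * (1 - (Real.cosh (c * x) / Real.sinh (c * x)) ^ 2)) x := by
  have hcoth := (hasDerivAt_cosh_div_sinh (mul_ne_zero hc hx)).comp x (hasDerivAt_const_mul c)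
  exact hcoth.congr_deriv (mul_comm _ _)

theorem one_lt_cosh_div_sinh (hx : 0 < x) : 1 < Real.cosh x / Real.sinh x :=
  (one_lt_div (Real.sinh_pos_iff.mpr hx)).mpr (Real.sinh_lt_cosh x)

end Hyperbolic

theorem exp_mul_rpow_neg_mul_cancel {s : ℝ} (hs : 0 < s) (b p u : ℝ) :
    Real.exp u * s ^ (-p) * (b * Real.exp (-u) * s ^ p) = b := by
  have hsp : s ^ p ≠ 0 := (Real.rpow_pos_of_pos hs p).ne'
  rw [Real.rpow_neg hs.le, Real.exp_neg]
  field_simp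

/-- The Einstein–Maxwell equations (E1)–(E4) at the time `τ`, where `a2inv` is `a⁻²` and `πp`
is `π₊`. The derivatives `α'` and `β'` are taken with `deriv`, so they are meaningful only where
`α` and `β` are differentiable. -/
structure EinsteinMaxwellAt (γ : ℝ) (a2inv α β ρ πp q1 : ℝ → ℝ) (τ : ℝ) : Prop where
  eq_one : deriv α τ - 2 * deriv β τ - 2 * α τ * β τ - 2 * (β τ) ^ 2
    = (1 / 2) * (3 * γ - 2) * a2inv τ * ρ τ + 3 * a2inv τ * πp τ
  eq_two : 2 * (α τ + β τ) = a2inv τ * q1 τ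
  eq_three : -deriv α τ - 2 * α τ * β τ - 2
    = (1 / 2) * (2 - γ) * a2inv τ * ρ τ + 3 * a2inv τ * πp τ
  eq_four : deriv β τ + 2 * (β τ) ^ 2 - 2 = (1 / 2) * (2 - γ) * a2inv τ * ρ τ

theorem EinsteinMaxwellAt.of_riccati (γ : ℝ) {a2inv α β ρ πp q1 : ℝ → ℝ} {τ : ℝ}
    (hρ : ρ τ = 0) (hq1 : q1 τ = 3 * πp τ)
    (hβ : HasDerivAt β (2 * (1 - β τ ^ 2)) τ)
    (hα : α =ᶠ[nhds τ] fun t => (1 / 2) * β t - 3 / 2)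
    (hπ : a2inv τ * πp τ = β τ - 1) :
    EinsteinMaxwellAt γ a2inv α β ρ πp q1 τ := by
  have hα' : deriv α τ = 1 - β τ ^ 2 := by
    rw [hα.deriv_eq, ((hβ.const_mul (1 / 2)).sub_const (3 / 2)).deriv]
    ring
  have hατ : α τ = (1 / 2) * β τ - 3 / 2 := hα.eq_of_nhds
  constructor <;> simp only [hα', hβ.deriv, hατ, hρ, hq1]
  · linear_combination -3 * hπ
  · linear_combination -3 * hπ
  · linear_combination -3 * hπ
  · ring

/-- The right-handed electro-vacuum LRS solution: with
`a⁻² = e^{3τ}(sinh 2τ)^{−1/2}`, `α = (1/2)coth 2τ − 3/2`, `β = coth 2τ`,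
`ρ = 0`, `π₊ = (coth 2τ − 1)e^{−3τ}(sinh 2τ)^{1/2}`, `q₁ = 3π₊`, the
equations (E1)–(E4) hold for every `τ > 0` and every γ, with `ρ = 0`,
`π₊ > 0` and `q₁ = +3π₊`. -/
theorem stmt_15 (γ : ℝ)
    (a2inv α β ρ πp q1 : ℝ → ℝ)
    (ha : a2inv = fun τ => Real.exp (3 * τ) * Real.sinh (2 * τ) ^ (-(1 / 2) : ℝ))
    (hα : α = fun τ => (1 / 2) * (Real.cosh (2 * τ) / Real.sinh (2 * τ)) - 3 / 2)
    (hβ : β = fun τ => Real.cosh (2 * τ) / Real.sinh (2 * τ))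
    (hρ : ρ = fun _ => (0 : ℝ))
    (hπ : πp = fun τ => (Real.cosh (2 * τ) / Real.sinh (2 * τ) - 1)
      * Real.exp (-3 * τ) * Real.sinh (2 * τ) ^ ((1 / 2) : ℝ))
    (hq1 : q1 = fun τ => 3 * πp τ) :
    ∀ τ : ℝ, 0 < τ →
      (deriv α τ - 2 * deriv β τ - 2 * α τ * β τ - 2 * (β τ) ^ 2
        = (1 / 2) * (3 * γ - 2) * a2inv τ * ρ τ + 3 * a2inv τ * πp τ) ∧
      (2 * (α τ + β τ) = a2inv τ * q1 τ) ∧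
      (-deriv α τ - 2 * α τ * β τ - 2
        = (1 / 2) * (2 - γ) * a2inv τ * ρ τ + 3 * a2inv τ * πp τ) ∧
      (deriv β τ + 2 * (β τ) ^ 2 - 2 = (1 / 2) * (2 - γ) * a2inv τ * ρ τ) ∧
      ρ τ = 0 ∧ 0 < πp τ ∧ q1 τ = 3 * πp τ := by
  intro τ hτ
  have hsinh : 0 < Real.sinh (2 * τ) := Real.sinh_pos_iff.mpr (by positivity)
  have hcoth : 0 < Real.cosh (2 * τ) / Real.sinh (2 * τ) - 1 :=
    sub_pos.mpr (one_lt_cosh_div_sinh (by positivity))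
  have hβ' : HasDerivAt β (2 * (1 - β τ ^ 2)) τ := by
    simpa only [hβ] using hasDerivAt_cosh_div_sinh_const_mul two_ne_zero hτ.ne'
  have hαβ : α = fun t => (1 / 2) * β t - 3 / 2 := by rw [hα, hβ]
  have haπ : a2inv τ * πp τ = β τ - 1 := by
    simpa only [ha, hπ, hβ, neg_mul] using exp_mul_rpow_neg_mul_cancel hsinh _ (1 / 2) (3 * τ)
  have hρτ : ρ τ = 0 := congrFun hρ τ
  have hq1τ : q1 τ = 3 * πp τ := congrFun hq1 τ
  have hπpos : 0 < πp τ := by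
    rw [hπ]
    positivity
  obtain ⟨h₁, h₂, h₃, h₄⟩ := EinsteinMaxwellAt.of_riccati γ hρτ hq1τ hβ' (.of_eq hαβ) haπ
  exact ⟨h₁, h₂, h₃, h₄, hρτ, hπpos, hq1τ⟩
end

section
/- Fix r > 1 and γ = 2/3, and define on ℝ: u(τ) = e^{2(1−r)τ}/(1 + e^{2(1−r)τ}), a(τ)⁻² = e^{2rτ}(1 + e^{2(1−r)τ})^{−1/2}, α(τ) = −r + ((1−r)/2)u(τ), β(τ) = r + (1−r)u(τ), ρ(τ) = 3(r²−1)(1−u(τ))·a(τ)², π₊(τ) = (r−1)u(τ)·a(τ)², q₁(τ) = −3π₊(τ). Then for every τ ∈ ℝ the equations (E1) α' − 2β' − 2αβ − 2β² = 3a⁻²π₊, (E2) 2(α+β) = a⁻²q₁, (E3) −α' − 2αβ − 2 = (2/3)a⁻²ρ + 3a⁻²π₊, (E4) β' + 2β² − 2 = (2/3)a⁻²ρ hold, with ρ > 0 and π₊ > 0. This left-handed γ = 2/3 LRS Einstein–Maxwell solution is a new exact solution; it is past-asymptotic to an electro-vacuum plane wave and future-asymptotic to an open FLRW universe. -/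
/-!
For `γ = 2/3` the fluid drops out of (E1), and the difference of (E3) and (E4) is also free of it.
For a left-handed null field, (E2) turns these two relations into `(α - 2β)' = 2(α + β)(β - 1)` and
`(α + β)' = -2(α + β)(β - 1)`. Their sum says that `2α - β` is constant; calling the constant `-3r`
and setting `β = r + (1 - r)u`, `α = -r + (1 - r)u / 2`, what remains is the logistic equation
`u' = 2(1 - r)u(1 - u)`, after which (E2) determines `π₊` and (E4) determines `ρ`. Hence any
logistic `u` gives a solution, and the sigmoid stays in `(0, 1)`, which makes both energy densities
positive when `r > 1`.
-/

theorem sigmoid_eq_exp_div (x : ℝ) : Real.sigmoid x = Real.exp x / (1 + Real.exp x) := by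
  rw [Real.sigmoid_def, Real.exp_neg]
  field_simp
  ring

theorem hasDerivAt_sigmoid_const_mul (c τ : ℝ) :
    HasDerivAt (fun t => Real.sigmoid (c * t))
      (c * (Real.sigmoid (c * τ) * (1 - Real.sigmoid (c * τ)))) τ :=
  ((Real.hasDerivAt_sigmoid (c * τ)).comp τ (hasDerivAt_const_mul c)).congr_deriv (mul_comm _ _)

/-- The reduced Einstein–Maxwell equations (E1)–(E4) at time `τ` for a nontilted fluid with pressure
`(γ - 1)ρ` and a null homogeneous electromagnetic field of energy density `3 * πp` and Poynting
component `q1`, on an LRS Bianchi V/VII_h metric in Siklos form. The function `a2inv` stands for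
`a⁻²`; its relation `a' = α a` to `α` is not part of the equations. -/
structure FieldEquationsAt (γ : ℝ) (a2inv α β ρ πp q1 : ℝ → ℝ) (τ : ℝ) : Prop where
  time_time : deriv α τ - 2 * deriv β τ - 2 * α τ * β τ - 2 * β τ ^ 2
    = 1 / 2 * (3 * γ - 2) * a2inv τ * ρ τ + 3 * a2inv τ * πp τ
  time_axis : 2 * (α τ + β τ) = a2inv τ * q1 τ
  axis_axis : -deriv α τ - 2 * α τ * β τ - 2
    = 1 / 2 * (2 - γ) * a2inv τ * ρ τ + 3 * a2inv τ * πp τ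
  transverse : deriv β τ + 2 * β τ ^ 2 - 2 = 1 / 2 * (2 - γ) * a2inv τ * ρ τ

theorem fieldEquationsAt_of_logistic {r τ : ℝ} {u a2inv : ℝ → ℝ}
    (hu : HasDerivAt u (2 * (1 - r) * (u τ * (1 - u τ))) τ) (ha : a2inv τ ≠ 0) :
    FieldEquationsAt (2 / 3) a2inv
      (fun t => -r + (1 - r) / 2 * u t)
      (fun t => r + (1 - r) * u t)
      (fun t => 3 * (r ^ 2 - 1) * (1 - u t) * (a2inv t)⁻¹)
      (fun t => (r - 1) * u t * (a2inv t)⁻¹)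
      (fun t => -3 * ((r - 1) * u t * (a2inv t)⁻¹)) τ := by
  have deriv_α := ((hu.const_mul ((1 - r) / 2)).const_add (-r)).deriv
  have deriv_β := ((hu.const_mul (1 - r)).const_add r).deriv
  constructor
  case time_time => rw [deriv_α, deriv_β]; field_simp; ring
  case time_axis => field_simp; ring
  case axis_axis => rw [deriv_α]; field_simp; ring
  case transverse => rw [deriv_β]; field_simp; ring

/-- The left-handed γ = 2/3 LRS Einstein–Maxwell solution: with
`u = e^{2(1−r)τ}/(1 + e^{2(1−r)τ})`, `a⁻² = e^{2rτ}(1 + e^{2(1−r)τ})^{−1/2}`,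
`α = −r + ((1−r)/2)u`, `β = r + (1−r)u`, `ρ = 3(r²−1)(1−u)·a²`,
`π₊ = (r−1)u·a²`, `q₁ = −3π₊` (r > 1), the equations (E1)–(E4) with γ = 2/3
hold for every τ ∈ ℝ, with `ρ > 0` and `π₊ > 0`. -/
theorem stmt_18 (r : ℝ) (hr : 1 < r)
    (u a2inv α β ρ πp q1 : ℝ → ℝ)
    (hu : u = fun τ => Real.exp (2 * (1 - r) * τ) / (1 + Real.exp (2 * (1 - r) * τ)))
    (ha : a2inv = fun τ => Real.exp (2 * r * τ)
      * (1 + Real.exp (2 * (1 - r) * τ)) ^ (-(1 / 2) : ℝ))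
    (hα : α = fun τ => -r + ((1 - r) / 2) * u τ)
    (hβ : β = fun τ => r + (1 - r) * u τ)
    (hρ : ρ = fun τ => 3 * (r ^ 2 - 1) * (1 - u τ) * (a2inv τ)⁻¹)
    (hπ : πp = fun τ => (r - 1) * u τ * (a2inv τ)⁻¹)
    (hq1 : q1 = fun τ => -3 * πp τ) :
    ∀ τ : ℝ,
      (deriv α τ - 2 * deriv β τ - 2 * α τ * β τ - 2 * (β τ) ^ 2
        = 3 * a2inv τ * πp τ) ∧
      (2 * (α τ + β τ) = a2inv τ * q1 τ) ∧
      (-deriv α τ - 2 * α τ * β τ - 2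
        = (2 / 3) * a2inv τ * ρ τ + 3 * a2inv τ * πp τ) ∧
      (deriv β τ + 2 * (β τ) ^ 2 - 2 = (2 / 3) * a2inv τ * ρ τ) ∧
      0 < ρ τ ∧ 0 < πp τ := by
  intro τ
  have u_eq : u = fun t => Real.sigmoid (2 * (1 - r) * t) := by
    simp only [hu, sigmoid_eq_exp_div]
  have a2inv_pos : 0 < a2inv τ := by rw [ha]; positivity
  have u_pos : 0 < u τ := by rw [u_eq]; exact Real.sigmoid_pos _
  have one_sub_u_pos : 0 < 1 - u τ := by rw [u_eq]; exact sub_pos.2 (Real.sigmoid_lt_one _)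
  have logistic : HasDerivAt u (2 * (1 - r) * (u τ * (1 - u τ))) τ := by
    rw [u_eq]; exact hasDerivAt_sigmoid_const_mul _ τ
  have equations : FieldEquationsAt (2 / 3) a2inv α β ρ πp q1 τ := by
    subst hq1 hπ hρ hβ hα
    exact fieldEquationsAt_of_logistic logistic a2inv_pos.ne'
  refine ⟨?_, equations.time_axis, ?_, ?_, ?_, ?_⟩
  · linear_combination equations.time_time
  · linear_combination equations.axis_axis
  · linear_combination equations.transverse
  · have r_sq_sub_one_pos : 0 < r ^ 2 - 1 := sub_pos.2 (one_lt_pow₀ hr two_ne_zero)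
    simpa only [hρ] using
      mul_pos (mul_pos (mul_pos three_pos r_sq_sub_one_pos) one_sub_u_pos) (inv_pos.2 a2inv_pos)
  · simpa only [hπ] using mul_pos (mul_pos (sub_pos.2 hr) u_pos) (inv_pos.2 a2inv_pos)
end

section
/- Fix r > 1 and γ = 2/3, and define on the interval τ > 0: v(τ) = e^{−2(1+r)τ}/(1 − e^{−2(1+r)τ}), a(τ)⁻² = e^{2rτ}(1 − e^{−2(1+r)τ})^{−1/2}, α(τ) = −r + ((1+r)/2)v(τ), β(τ) = r + (1+r)v(τ), ρ(τ) = 3(r²−1)(1+v(τ))·a(τ)², π₊(τ) = (r+1)v(τ)·a(τ)², q₁(τ) = +3π₊(τ). Then for every τ > 0 the equations (E1) α' − 2β' − 2αβ − 2β² = 3a⁻²π₊, (E2) 2(α+β) = a⁻²q₁, (E3) −α' − 2αβ − 2 = (2/3)a⁻²ρ + 3a⁻²π₊, (E4) β' + 2β² − 2 = (2/3)a⁻²ρ hold, with ρ > 0 and π₊ > 0. This right-handed γ = 2/3 LRS Einstein–Maxwell solution is a new exact solution; it is future-asymptotic to an open FLRW universe. -/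
/-!
The profile `v = E / (1 - E)` with `E = e^{-2(1+r)τ}` solves the logistic equation
`v' = -2(1+r) v (1 + v)`. Since `α` and `β` are affine in `v`, and so are `a⁻²ρ` and `a⁻²π₊`, this
equation turns the field equations into polynomial identities in `r` and `v`; neither the explicit
form of `v` nor that of the nonvanishing factor `a⁻²` matters any further. The signs of `ρ` and
`π₊` follow from `0 < E < 1`.
-/

section Logistic

variable {𝕜 : Type*} [NontriviallyNormedField 𝕜] {f : 𝕜 → 𝕜} {c f' x : 𝕜}

theorem hasDerivAt_div_one_sub (hf : HasDerivAt f f' x) (hx : f x ≠ 1) :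
    HasDerivAt (fun t ↦ f t / (1 - f t)) (f' / (1 - f x) ^ 2) x := by
  refine (hf.fun_div (hf.const_sub 1) (sub_ne_zero.2 hx.symm)).congr_deriv ?_
  ring

theorem hasDerivAt_div_one_sub_logistic (hf : HasDerivAt f (c * f x) x) (hx : f x ≠ 1) :
    HasDerivAt (fun t ↦ f t / (1 - f t))
      (c * (f x / (1 - f x)) * (1 + f x / (1 - f x))) x := by
  have hne : 1 - f x ≠ 0 := sub_ne_zero.2 hx.symm
  refine (hasDerivAt_div_one_sub hf hx).congr_deriv ?_
  field_simp
  ring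

theorem hasDerivAt_exp_const_mul (c t : ℝ) :
    HasDerivAt (fun t ↦ Real.exp (c * t)) (c * Real.exp (c * t)) t := by
  simpa only [id, mul_one, mul_comm] using ((hasDerivAt_id t).const_mul c).exp

theorem exp_div_one_sub_exp_pos {x : ℝ} (hx : x < 0) : 0 < Real.exp x / (1 - Real.exp x) :=
  div_pos (Real.exp_pos x) (sub_pos.2 (Real.exp_lt_one_iff.2 hx))

end Logistic

/-- The logarithmic derivative `α = a'/a` of the right-handed `γ = 2/3` solution, as a function of
an arbitrary profile `v`. -/
noncomputable def siklosAlpha (r : ℝ) (v : ℝ → ℝ) : ℝ → ℝ := fun τ ↦ -r + ((1 + r) / 2) * v τ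

/-- The derivative `β = λ'` of the right-handed `γ = 2/3` solution, as a function of an arbitrary
profile `v`. -/
def siklosBeta (r : ℝ) (v : ℝ → ℝ) : ℝ → ℝ := fun τ ↦ r + (1 + r) * v τ

section FieldEquations

variable {r τ : ℝ} {v : ℝ → ℝ}

theorem deriv_siklosAlpha (hv : HasDerivAt v (-2 * (1 + r) * v τ * (1 + v τ)) τ) :
    deriv (siklosAlpha r v) τ = -(1 + r) ^ 2 * v τ * (1 + v τ) := by
  refine ((hv.const_mul ((1 + r) / 2)).const_add (-r)).deriv.trans ?_
  ring

theorem deriv_siklosBeta (hv : HasDerivAt v (-2 * (1 + r) * v τ * (1 + v τ)) τ) :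
    deriv (siklosBeta r v) τ = -2 * (1 + r) ^ 2 * v τ * (1 + v τ) := by
  refine ((hv.const_mul (1 + r)).const_add r).deriv.trans ?_
  ring

-- In the next four lemmas `(r + 1) * v τ` is `a⁻²π₊` and `3 * (r ^ 2 - 1) * (1 + v τ)` is `a⁻²ρ`.

theorem siklos_timeTime_equation (hv : HasDerivAt v (-2 * (1 + r) * v τ * (1 + v τ)) τ) :
    deriv (siklosAlpha r v) τ - 2 * deriv (siklosBeta r v) τ
        - 2 * siklosAlpha r v τ * siklosBeta r v τ - 2 * siklosBeta r v τ ^ 2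
      = 3 * ((r + 1) * v τ) := by
  rw [deriv_siklosAlpha hv, deriv_siklosBeta hv, siklosAlpha, siklosBeta]
  ring

theorem siklos_momentum_equation (r τ : ℝ) (v : ℝ → ℝ) :
    2 * (siklosAlpha r v τ + siklosBeta r v τ) = 3 * ((r + 1) * v τ) := by
  rw [siklosAlpha, siklosBeta]
  ring

theorem siklos_longitudinal_equation (hv : HasDerivAt v (-2 * (1 + r) * v τ * (1 + v τ)) τ) :
    -deriv (siklosAlpha r v) τ - 2 * siklosAlpha r v τ * siklosBeta r v τ - 2
      = 2 / 3 * (3 * (r ^ 2 - 1) * (1 + v τ)) + 3 * ((r + 1) * v τ) := by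
  rw [deriv_siklosAlpha hv, siklosAlpha, siklosBeta]
  ring

theorem siklos_transverse_equation (hv : HasDerivAt v (-2 * (1 + r) * v τ * (1 + v τ)) τ) :
    deriv (siklosBeta r v) τ + 2 * siklosBeta r v τ ^ 2 - 2
      = 2 / 3 * (3 * (r ^ 2 - 1) * (1 + v τ)) := by
  rw [deriv_siklosBeta hv, siklosBeta]
  ring

end FieldEquations

/-- The right-handed γ = 2/3 LRS Einstein–Maxwell solution: with
`v = e^{−2(1+r)τ}/(1 − e^{−2(1+r)τ})`, `a⁻² = e^{2rτ}(1 − e^{−2(1+r)τ})^{−1/2}`,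
`α = −r + ((1+r)/2)v`, `β = r + (1+r)v`, `ρ = 3(r²−1)(1+v)·a²`,
`π₊ = (r+1)v·a²`, `q₁ = +3π₊` (r > 1), the equations (E1)–(E4) with γ = 2/3
hold for every `τ > 0`, with `ρ > 0` and `π₊ > 0`. -/
theorem stmt_19 (r : ℝ) (hr : 1 < r)
    (v a2inv α β ρ πp q1 : ℝ → ℝ)
    (hv : v = fun τ => Real.exp (-2 * (1 + r) * τ)
      / (1 - Real.exp (-2 * (1 + r) * τ)))
    (ha : a2inv = fun τ => Real.exp (2 * r * τ)
      * (1 - Real.exp (-2 * (1 + r) * τ)) ^ (-(1 / 2) : ℝ))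
    (hα : α = fun τ => -r + ((1 + r) / 2) * v τ)
    (hβ : β = fun τ => r + (1 + r) * v τ)
    (hρ : ρ = fun τ => 3 * (r ^ 2 - 1) * (1 + v τ) * (a2inv τ)⁻¹)
    (hπ : πp = fun τ => (r + 1) * v τ * (a2inv τ)⁻¹)
    (hq1 : q1 = fun τ => 3 * πp τ) :
    ∀ τ : ℝ, 0 < τ →
      (deriv α τ - 2 * deriv β τ - 2 * α τ * β τ - 2 * (β τ) ^ 2
        = 3 * a2inv τ * πp τ) ∧
      (2 * (α τ + β τ) = a2inv τ * q1 τ) ∧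
      (-deriv α τ - 2 * α τ * β τ - 2
        = (2 / 3) * a2inv τ * ρ τ + 3 * a2inv τ * πp τ) ∧
      (deriv β τ + 2 * (β τ) ^ 2 - 2 = (2 / 3) * a2inv τ * ρ τ) ∧
      0 < ρ τ ∧ 0 < πp τ := by
  intro τ hτ
  have hexponent : -2 * (1 + r) * τ < 0 := mul_neg_of_neg_of_pos (by linarith) hτ
  have hexp : Real.exp (-2 * (1 + r) * τ) < 1 := Real.exp_lt_one_iff.2 hexponent
  have hv_pos : 0 < v τ := hv ▸ exp_div_one_sub_exp_pos hexponent
  have hv_logistic : HasDerivAt v (-2 * (1 + r) * v τ * (1 + v τ)) τ :=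
    hv ▸ hasDerivAt_div_one_sub_logistic (hasDerivAt_exp_const_mul _ τ) hexp.ne
  have ha_pos : 0 < a2inv τ :=
    ha ▸ mul_pos (Real.exp_pos _) (Real.rpow_pos_of_pos (sub_pos.2 hexp) _)
  have hr_sq : 0 < r ^ 2 - 1 := sub_pos.2 (one_lt_pow₀ hr two_ne_zero)
  have haρ : a2inv τ * ρ τ = 3 * (r ^ 2 - 1) * (1 + v τ) := by
    rw [hρ, mul_left_comm, mul_inv_cancel₀ ha_pos.ne', mul_one]
  have haπ : a2inv τ * πp τ = (r + 1) * v τ := by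
    rw [hπ, mul_left_comm, mul_inv_cancel₀ ha_pos.ne', mul_one]
  obtain rfl : α = siklosAlpha r v := hα
  obtain rfl : β = siklosBeta r v := hβ
  refine ⟨?_, ?_, ?_, ?_, ?_, ?_⟩
  · linear_combination siklos_timeTime_equation hv_logistic - 3 * haπ
  · rw [hq1]
    linear_combination siklos_momentum_equation r τ v - 3 * haπ
  · linear_combination siklos_longitudinal_equation hv_logistic - 2 / 3 * haρ - 3 * haπ
  · linear_combination siklos_transverse_equation hv_logistic - 2 / 3 * haρ
  · exact pos_of_mul_pos_right (haρ ▸ by positivity) ha_pos.le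
  · exact pos_of_mul_pos_right (haπ ▸ by positivity) ha_pos.le
end
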